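/- Let (g,σ,B) be a symmetric triple with eigenspace decomposition g = h ⊕ m, h = ⁅m,m⁆. Let A : m → m be a linear automorphism such that B(Ax,Ay) = B(x,y) and A(⁅⁅x,y⁆,z⁆) = ⁅⁅Ax,Ay⁆,Az⁆ for all x,y,z ∈ m. Then there exists a unique Lie algebra automorphism Φ of g such that Φ restricted to m equals A and Φ ∘ σ = σ ∘ Φ. -/

import Mathlib

/-- For a symmetric triple `(g, σ, B)` with `g = h ⊕ m`, `h = ⁅m,m⁆`, every
linear automorphism `A` of `m` preserving `B` and the triple product `⁅⁅·,·⁆,·⁆` extends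
uniquely to a Lie algebra automorphism `Φ` of `g` with `Φ|_m = A` and `Φ ∘ σ = σ ∘ Φ`. -/
theorem lts_automorphism_extends
    (L : Type*) [LieRing L] [LieAlgebra ℝ L] [FiniteDimensional ℝ L]
    (σ : L →ₗ⁅ℝ⁆ L) (hσ : ∀ x, σ (σ x) = x)
    (H M : Submodule ℝ L)
    (hH : ∀ x, x ∈ H ↔ σ x = x)
    (hM : ∀ x, x ∈ M ↔ σ x = -x)
    (hcompl : IsCompl H M)
    (hHspan : H = Submodule.span ℝ {z : L | ∃ x ∈ M, ∃ y ∈ M, ⁅x, y⁆ = z})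
    (hMM : ∀ x ∈ M, ∀ y ∈ M, ⁅x, y⁆ ∈ H)
    (hHM : ∀ h ∈ H, ∀ m ∈ M, ⁅h, m⁆ ∈ M)
    (B : LinearMap.BilinForm ℝ L)
    (hBnd : B.Nondegenerate)
    (hBsymm : ∀ x y : L, B x y = B y x)
    (hBσ : ∀ x y : L, B (σ x) (σ y) = B x y)
    (hBad : ∀ x y z : L, B ⁅x, y⁆ z = B x ⁅y, z⁆)
    (A : ↥M ≃ₗ[ℝ] ↥M)
    (hAB : ∀ x y : ↥M, B (A x : L) (A y : L) = B (x : L) (y : L))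
    (hAtriple : ∀ x y z : ↥M,
      (A ⟨⁅⁅(x : L), (y : L)⁆, (z : L)⁆, hHM _ (hMM _ x.2 _ y.2) _ z.2⟩ : L)
        = ⁅⁅(A x : L), (A y : L)⁆, (A z : L)⁆) :
    ∃! Φ : L ≃ₗ⁅ℝ⁆ L,
      (∀ x : ↥M, Φ (x : L) = A x) ∧ (∀ x : L, Φ (σ x) = σ (Φ x)) := by
  have hBMH : ∀ h ∈ H, ∀ m ∈ M, B h m = 0 := by
    intro h hh m hm
    have h1 := hBσ h m
    rw [(hH h).1 hh, (hM m).1 hm, map_neg] at h1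
    linarith
  have hdec : ∀ x : L, ∃ h ∈ H, ∃ m ∈ M, h + m = x := by
    intro x
    have hx : x ∈ H ⊔ M := by rw [hcompl.sup_eq_top]; trivial
    exact Submodule.mem_sup.1 hx
  have hdisj : ∀ x ∈ H, x ∈ M → x = 0 := fun x h1 h2 =>
    Submodule.disjoint_def.1 hcompl.disjoint x h1 h2
  have hspan : ∀ h ∈ H, h ∈ Submodule.span ℝ {z : L | ∃ x ∈ M, ∃ y ∈ M, ⁅x, y⁆ = z} :=
    fun h hh => hHspan ▸ hh
  -- faithfulness of the isotropy action
  have hfaith : ∀ h ∈ H, (∀ m ∈ M, ⁅h, m⁆ = 0) → h = 0 := by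
    intro h hh h0
    have hk : ∀ k ∈ H, B h k = 0 := by
      intro k hk
      induction hspan k hk using Submodule.span_induction with
      | mem z hz =>
        obtain ⟨x, hx, y, hy, rfl⟩ := hz
        rw [← hBad, h0 x hx]; simp
      | zero => simp
      | add x y hx hy ihx ihy =>
        rw [map_add, ihx (hHspan ▸ hx), ihy (hHspan ▸ hy), add_zero]
      | smul c x hx ihx => rw [map_smul, ihx (hHspan ▸ hx), smul_zero]
    apply hBnd.1 h
    intro y
    obtain ⟨k, hk', m, hm, rfl⟩ := hdec y
    rw [map_add, hk k hk', hBMH h hh m hm, add_zero]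
  -- extend A to a linear endomorphism of L
  obtain ⟨a, ha⟩ : ∃ a : L →ₗ[ℝ] L, ∀ m : M, a m = A m := by
    obtain ⟨a, ha⟩ := LinearMap.exists_extend (M.subtype ∘ₗ A.toLinearMap)
    exact ⟨a, fun m => by simpa using LinearMap.congr_fun ha m⟩
  have haM : ∀ m ∈ M, a m ∈ M := fun m hm => by rw [ha ⟨m, hm⟩]; exact (A _).2
  have hainj : ∀ m ∈ M, a m = 0 → m = 0 := by
    intro m hm h0
    rw [ha ⟨m, hm⟩] at h0
    have h1 : A ⟨m, hm⟩ = 0 := Subtype.ext h0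
    rw [LinearEquiv.map_eq_zero_iff] at h1
    exact congrArg Subtype.val h1
  have hasurj : ∀ n ∈ M, ∃ m ∈ M, a m = n := by
    intro n hn
    refine ⟨A.symm ⟨n, hn⟩, (A.symm _).2, ?_⟩
    rw [ha]; simp
  have hat : ∀ x ∈ M, ∀ y ∈ M, ∀ z ∈ M, a ⁅⁅x, y⁆, z⁆ = ⁅⁅a x, a y⁆, a z⁆ := by
    intro x hx y hy z hz
    have h1 := hAtriple ⟨x, hx⟩ ⟨y, hy⟩ ⟨z, hz⟩
    rw [← ha, ← ha, ← ha, ← ha] at h1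
    exact h1
  have hHH : ∀ x ∈ H, ∀ y ∈ H, ⁅x, y⁆ ∈ H := by
    intro x hx y hy
    rw [hH, LieHom.map_lie, (hH x).1 hx, (hH y).1 hy]
  have hex : ∀ h ∈ H, ∃ h' ∈ H, ∀ n ∈ M, ⁅h', a n⁆ = a ⁅h, n⁆ := by
    intro h hh
    induction hspan h hh using Submodule.span_induction with
    | mem z hz =>
      obtain ⟨x, hx, y, hy, rfl⟩ := hz
      exact ⟨⁅a x, a y⁆, hMM _ (haM x hx) _ (haM y hy), fun n hn => (hat x hx y hy n hn).symm⟩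
    | zero => exact ⟨0, H.zero_mem, by simp⟩
    | add x y hx hy ihx ihy =>
      obtain ⟨x', hx', h1⟩ := ihx (hHspan ▸ hx)
      obtain ⟨y', hy', h2⟩ := ihy (hHspan ▸ hy)
      exact ⟨x' + y', H.add_mem hx' hy', fun n hn => by
        rw [add_lie, add_lie, map_add, h1 n hn, h2 n hn]⟩
    | smul c x hx ihx =>
      obtain ⟨x', hx', h1⟩ := ihx (hHspan ▸ hx)
      exact ⟨c • x', H.smul_mem c hx', fun n hn => by
        rw [smul_lie, smul_lie, map_smul, h1 n hn]⟩
  have huniq : ∀ h' ∈ H, ∀ h'' ∈ H, (∀ n ∈ M, ⁅h', a n⁆ = ⁅h'', a n⁆) → h' = h'' := by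
    intro h' hh' h'' hh'' h1
    rw [← sub_eq_zero]
    apply hfaith _ (H.sub_mem hh' hh'')
    intro m hm
    obtain ⟨n, hn, rfl⟩ := hasurj m hm
    rw [sub_lie, h1 n hn, sub_self]
  -- the graph of the extension
  let R : L → L → Prop := fun x y => ∃ h ∈ H, ∃ h' ∈ H, ∃ m ∈ M,
    x = h + m ∧ y = h' + a m ∧ ∀ n ∈ M, ⁅h', a n⁆ = a ⁅h, n⁆
  have hRex : ∀ x, ∃ y, R x y := by
    intro x
    obtain ⟨h, hh, m, hm, rfl⟩ := hdec x
    obtain ⟨h', hh', h1⟩ := hex h hh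
    exact ⟨h' + a m, h, hh, h', hh', m, hm, rfl, rfl, h1⟩
  have hRun : ∀ x y z, R x y → R x z → y = z := by
    rintro x y z ⟨h, hh, h', hh', m, hm, rfl, rfl, h1⟩ ⟨k, hk, k', hk', n, hn, e, rfl, h2⟩
    have e1 : h - k = n - m := by
      rw [sub_eq_sub_iff_add_eq_add, e, add_comm]
    have e2 := hdisj (h - k) (H.sub_mem hh hk) (e1 ▸ M.sub_mem hn hm)
    have e3 : n - m = 0 := e1 ▸ e2
    obtain rfl := sub_eq_zero.1 e2
    obtain rfl := sub_eq_zero.1 e3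
    rw [huniq h' hh' k' hk' fun p hp => by rw [h1 p hp, h2 p hp]]
  choose F hF using hRex
  have hFadd : ∀ x y, F (x + y) = F x + F y := by
    intro x y
    apply hRun _ _ _ (hF _)
    obtain ⟨h, hh, h', hh', m, hm, e1, e2, h1⟩ := hF x
    obtain ⟨k, hk, k', hk', n, hn, e3, e4, h2⟩ := hF y
    refine ⟨h + k, H.add_mem hh hk, h' + k', H.add_mem hh' hk', m + n, M.add_mem hm hn, ?_, ?_, ?_⟩
    · rw [e1, e3]; abel
    · rw [e2, e4, map_add]; abel
    · intro p hp
      rw [add_lie, add_lie, map_add, h1 p hp, h2 p hp]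
  have hFsmul : ∀ (c : ℝ) x, F (c • x) = c • F x := by
    intro c x
    apply hRun _ _ _ (hF _)
    obtain ⟨h, hh, h', hh', m, hm, e1, e2, h1⟩ := hF x
    refine ⟨c • h, H.smul_mem c hh, c • h', H.smul_mem c hh', c • m, M.smul_mem c hm, ?_, ?_, ?_⟩
    · rw [e1, smul_add]
    · rw [e2, map_smul, smul_add]
    · intro p hp
      rw [smul_lie, smul_lie, map_smul, h1 p hp]
  have hFlie : ∀ x y, F ⁅x, y⁆ = ⁅F x, F y⁆ := by
    intro x y
    apply hRun _ _ _ (hF _)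
    obtain ⟨h, hh, h', hh', m, hm, e1, e2, h1⟩ := hF x
    obtain ⟨k, hk, k', hk', n, hn, e3, e4, h2⟩ := hF y
    refine ⟨⁅h, k⁆ + ⁅m, n⁆, H.add_mem (hHH _ hh _ hk) (hMM _ hm _ hn),
      ⁅h', k'⁆ + ⁅a m, a n⁆, H.add_mem (hHH _ hh' _ hk') (hMM _ (haM m hm) _ (haM n hn)),
      ⁅h, n⁆ - ⁅k, m⁆, M.sub_mem (hHM _ hh _ hn) (hHM _ hk _ hm), ?_, ?_, ?_⟩
    · rw [e1, e3, add_lie, lie_add, lie_add, ← lie_skew m k]; abel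
    · rw [e2, e4, map_sub, ← h1 n hn, ← h2 m hm, add_lie, lie_add, lie_add,
        ← lie_skew (a m) k']; abel
    · intro p hp
      rw [add_lie, add_lie, map_add, hat m hm n hn p hp, lie_lie h k p, lie_lie h' k', map_sub,
        h2 p hp, h1 p hp, h1 _ (hHM _ hk _ hp), h2 _ (hHM _ hh _ hp)]
  have hFM : ∀ m ∈ M, F m = a m := fun m hm => by
    apply hRun _ _ _ (hF _)
    exact ⟨0, H.zero_mem, 0, H.zero_mem, m, hm, by simp, by simp, by simp⟩
  have hFσ : ∀ x, F (σ x) = σ (F x) := by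
    intro x
    apply hRun _ _ _ (hF _)
    obtain ⟨h, hh, h', hh', m, hm, e1, e2, h1⟩ := hF x
    refine ⟨h, hh, h', hh', -m, M.neg_mem hm, ?_, ?_, h1⟩
    · rw [e1, map_add, (hH h).1 hh, (hM m).1 hm]
    · rw [e2, map_add, (hH h').1 hh', (hM _).1 (haM m hm), map_neg]
  have hF0 : ∀ x, F x = 0 → x = 0 := by
    intro x hx
    obtain ⟨h, hh, h', hh', m, hm, e1, e2, h1⟩ := hF x
    rw [hx] at e2
    have e3 : h' = -a m := eq_neg_of_add_eq_zero_left e2.symm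
    have e4 : h' = 0 := hdisj h' hh' (e3 ▸ M.neg_mem (haM m hm))
    have e5 : m = 0 := hainj m hm (by rw [e4, zero_add] at e2; exact e2.symm)
    have e6 : h = 0 := hfaith h hh fun p hp => hainj _ (hHM _ hh _ hp) (by
      rw [← h1 p hp, e4, zero_lie])
    rw [e1, e5, e6, add_zero]
  let f : L →ₗ⁅ℝ⁆ L :=
    { toFun := F, map_add' := hFadd, map_smul' := hFsmul, map_lie' := fun {x y} => hFlie x y }
  have hfinj : Function.Injective f :=
    (injective_iff_map_eq_zero f).2 hF0
  have hfsurj : Function.Surjective f :=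
    (LinearMap.injective_iff_surjective (f := (f : L →ₗ[ℝ] L))).1 hfinj
  refine ⟨LieEquiv.ofBijective f ⟨hfinj, hfsurj⟩, ⟨fun x => ?_, fun x => ?_⟩, ?_⟩
  · exact (hFM x x.2).trans (ha x)
  · exact hFσ x
  · rintro Ψ ⟨hΨ, -⟩
    have hΨM : ∀ m ∈ M, Ψ m = F m := fun m hm => by
      rw [hFM m hm, ha ⟨m, hm⟩, ← hΨ]
    have hΨH : ∀ h ∈ H, Ψ h = f h := by
      intro h hh
      induction hspan h hh using Submodule.span_induction with
      | mem z hz =>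
        obtain ⟨x, hx, y, hy, rfl⟩ := hz
        rw [LieEquiv.map_lie, LieHom.map_lie, hΨM x hx, hΨM y hy]; rfl
      | zero => simp
      | add x y hx hy ihx ihy =>
        rw [map_add, map_add, ihx (hHspan ▸ hx), ihy (hHspan ▸ hy)]
      | smul c x hx ihx => rw [map_smul, map_smul, ihx (hHspan ▸ hx)]
    ext x
    change Ψ x = f x
    obtain ⟨h, hh, m, hm, rfl⟩ := hdec x
    rw [map_add, map_add, hΨH h hh, hΨM m hm]; rfl
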